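/- arXiv:2408.08218 — 2 statements merged into one kernel-verified Lean document; each statement's English description precedes it below -/
import Mathlib

section
/- For every positive integer m, the evaluation of f_m at 1 (in F_2) equals 0 if and only if 3 divides m - 1. -/
open Polynomial

/-- `fibSet m` is the set of fibbinary integers below `2^m`: integers in `{0,…,2^m-1}`
whose binary representation has no two consecutive ones. -/
noncomputable def fibSet (m : ℕ) : Finset ℕ :=
  @Finset.filter _ (fun i => ∀ j : ℕ, ¬(i.testBit j ∧ i.testBit (j + 1)))
    (Classical.decPred _) (Finset.range (2 ^ m))

/-- The `m`-th fibbinary polynomial over `F_2`. -/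
noncomputable def fibPoly (m : ℕ) : Polynomial (ZMod 2) :=
  ∑ i ∈ fibSet m, X ^ i

/-!
The lowest bits of a fibbinary integer are `0` or `01`, which gives the Fibonacci recurrence for
the size of `F_m`, hence `|F_m| = fib (m + 2)`. Evaluating at `1` reduces this size modulo
`2 = fib 3`, and `fib 3 ∣ fib (m + 2)` exactly when `3 ∣ m + 2` because `fib` commutes with `gcd`.
-/

/-- A natural number is fibbinary if its binary expansion has no two consecutive ones. This is the
predicate cutting out `fibSet m` inside `{0, …, 2 ^ m - 1}`. -/
def IsFibbinary (n : ℕ) : Prop :=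
  ∀ j : ℕ, ¬(n.testBit j ∧ n.testBit (j + 1))

theorem mem_fibSet {m n : ℕ} : n ∈ fibSet m ↔ n < 2 ^ m ∧ IsFibbinary n := by
  simp only [fibSet, IsFibbinary, Finset.mem_filter, Finset.mem_range]

namespace IsFibbinary

theorem bit_iff {b : Bool} {n : ℕ} :
    IsFibbinary (Nat.bit b n) ↔ ¬(b ∧ n.testBit 0) ∧ IsFibbinary n := by
  rw [IsFibbinary, ← Nat.and_forall_add_one]
  simp only [IsFibbinary, Nat.testBit_bit_zero, Nat.testBit_bit_succ]

theorem two_mul_iff {n : ℕ} : IsFibbinary (2 * n) ↔ IsFibbinary n := by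
  simpa using bit_iff (b := false) (n := n)

theorem two_mul_add_one_iff {n : ℕ} : IsFibbinary (2 * n + 1) ↔ Even n ∧ IsFibbinary n := by
  simpa [Nat.even_iff] using bit_iff (b := true) (n := n)

theorem zero : IsFibbinary 0 := by
  simp [IsFibbinary]

theorem one : IsFibbinary 1 :=
  two_mul_add_one_iff.2 ⟨Even.zero, zero⟩

end IsFibbinary

theorem fibSet_zero : fibSet 0 = {0} := by
  ext n
  rw [mem_fibSet, pow_zero, Nat.lt_one_iff, Finset.mem_singleton, and_iff_left_of_imp]
  rintro rfl
  exact .zero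

theorem fibSet_one : fibSet 1 = {0, 1} := by
  ext n
  have hlt : n < 2 ^ 1 ↔ n = 0 ∨ n = 1 := by omega
  rw [mem_fibSet, hlt, Finset.mem_insert, Finset.mem_singleton, and_iff_left_of_imp]
  rintro (rfl | rfl)
  exacts [.zero, .one]

theorem two_mul_mem_fibSet_succ {m n : ℕ} : 2 * n ∈ fibSet (m + 1) ↔ n ∈ fibSet m := by
  have hlt : 2 * n < 2 ^ (m + 1) ↔ n < 2 ^ m := by omega
  rw [mem_fibSet, mem_fibSet, hlt, IsFibbinary.two_mul_iff]

theorem two_mul_add_one_mem_fibSet_succ {m n : ℕ} :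
    2 * n + 1 ∈ fibSet (m + 1) ↔ Even n ∧ n ∈ fibSet m := by
  have hlt : 2 * n + 1 < 2 ^ (m + 1) ↔ n < 2 ^ m := by omega
  rw [mem_fibSet, mem_fibSet, hlt, IsFibbinary.two_mul_add_one_iff, and_left_comm]

theorem fibSet_add_two (m : ℕ) :
    fibSet (m + 2) = (fibSet m).image (4 * · + 1) ∪ (fibSet (m + 1)).image (2 * ·) := by
  ext n
  simp only [Finset.mem_union, Finset.mem_image]
  constructor
  · intro hn
    obtain ⟨k, rfl | rfl⟩ := n.even_or_odd'
    · exact .inr ⟨k, two_mul_mem_fibSet_succ.1 hn, rfl⟩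
    · obtain ⟨hk, hmem⟩ := two_mul_add_one_mem_fibSet_succ.1 hn
      obtain ⟨l, rfl⟩ := even_iff_exists_two_mul.1 hk
      exact .inl ⟨l, two_mul_mem_fibSet_succ.1 hmem, by ring⟩
  · rintro (⟨k, hk, rfl⟩ | ⟨k, hk, rfl⟩)
    · rw [show 4 * k + 1 = 2 * (2 * k) + 1 by ring]
      exact two_mul_add_one_mem_fibSet_succ.2 ⟨even_two_mul k, two_mul_mem_fibSet_succ.2 hk⟩
    · exact two_mul_mem_fibSet_succ.2 hk

theorem card_fibSet_add_two (m : ℕ) :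
    (fibSet (m + 2)).card = (fibSet m).card + (fibSet (m + 1)).card := by
  have hdisj : Disjoint ((fibSet m).image (4 * · + 1)) ((fibSet (m + 1)).image (2 * ·)) := by
    simp only [Finset.disjoint_left, Finset.mem_image]
    rintro _ ⟨a, -, rfl⟩ ⟨b, -, hb⟩
    omega
  rw [fibSet_add_two, Finset.card_union_of_disjoint hdisj,
    Finset.card_image_of_injective _ fun a b (h : 4 * a + 1 = 4 * b + 1) => by omega,
    Finset.card_image_of_injective _ fun a b (h : 2 * a = 2 * b) => by omega]

theorem card_fibSet (m : ℕ) : (fibSet m).card = Nat.fib (m + 2) := by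
  induction m using Nat.twoStepInduction with
  | zero => rw [fibSet_zero]; rfl
  | one => rw [fibSet_one]; rfl
  | more m ih ih_succ => rw [card_fibSet_add_two, ih, ih_succ, Nat.fib_add_two (n := m + 2)]

theorem fib_dvd_fib_iff {m n : ℕ} (hm : m ≠ 2) : Nat.fib m ∣ Nat.fib n ↔ m ∣ n := by
  refine ⟨fun h => ?_, Nat.isDvdSequence_fib m n⟩
  rcases lt_or_gt_of_ne hm with hlt | hgt
  · interval_cases m
    · simpa using h
    · exact one_dvd n
  · have hgcd : Nat.fib (m.gcd n) = Nat.fib m := by rw [Nat.fib_gcd, Nat.gcd_eq_left h]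
    have hge : m ≤ m.gcd n := by
      by_contra! hgcd_lt
      have hpred : Nat.fib (m - 1) < Nat.fib m := (Nat.fib_lt_fib (by omega)).2 (by omega)
      have hle : Nat.fib (m.gcd n) ≤ Nat.fib (m - 1) := Nat.fib_mono (by omega)
      omega
    exact Nat.gcd_eq_left_iff_dvd.1 ((Nat.gcd_le_left n (by omega)).antisymm hge)

theorem eval_one_sum_X_pow {R : Type*} [Semiring R] (s : Finset ℕ) :
    (∑ i ∈ s, (X : R[X]) ^ i).eval 1 = s.card := by
  simp [eval_finsetSum, X_pow_eq_monomial]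

theorem fibPoly_eval_one (m : ℕ) (hm : 0 < m) :
    (fibPoly m).eval 1 = 0 ↔ 3 ∣ (m - 1) := by
  calc
    (fibPoly m).eval 1 = 0
    _ ↔ (Nat.fib (m + 2) : ZMod 2) = 0 := by
      rw [fibPoly, eval_one_sum_X_pow, card_fibSet]
    _ ↔ Nat.fib 3 ∣ Nat.fib (m + 2) := ZMod.natCast_eq_zero_iff _ 2
    _ ↔ 3 ∣ m + 2 := fib_dvd_fib_iff (by decide)
    _ ↔ 3 ∣ m - 1 := by omega
end

section
/- For every integer m ≥ 4, the number of nonzero elements β of the finite field F_{2^m} with f^cyc_m(β) = 0 equals (2^m+1)/3 if m is odd, and equals (2^m-1)/3 if m is even. -/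
open Polynomial

/-- `fibCycSet m` is the set of integers in `{1,…,2^m-2}` whose `m`-bit binary
representation has no two cyclically consecutive ones. -/
def fibCycSet (m : ℕ) : Finset ℕ :=
  (Finset.Icc 1 (2 ^ m - 2)).filter
    (fun i => ∀ j < m, ¬(i.testBit j ∧ i.testBit ((j + 1) % m)))

/-- The `m`-th cyclic fibbinary polynomial over `F_2`. -/
noncomputable def fibCycPoly (m : ℕ) : Polynomial (ZMod 2) :=
  ∑ i ∈ fibCycSet m, X ^ i

/-! Summing `β ^ i` over cyclic words without two consecutive ones is a trace computation: with `σ`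
the Frobenius and `A` the transfer matrix of such words, `1 + f^cyc_m(β)` is the trace of
`P = A σ(A) ⋯ σᵐ⁻¹(A)`. As `σᵐ = 1`, the matrix `σ(P)` is conjugate to `P`, so the trace and the
determinant of `P` lie in `F_2`. Hence `det P = 1`, so `det (P - 1) = tr P`, and the trace vanishes
exactly when `P`, the matrix of the `m`-th iterate of the semilinear map `v ↦ A σ(v)`, has a
nonzero fixed vector. By Hilbert 90 this means that the semilinear map itself has one, that is,
`β = w ^ 3 + w ^ 2` for some `w`.

The roots are therefore the nonzero values missed by `u ↦ u ^ 3 + u ^ 2`. A nonempty fibre over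
`γ ≠ 0` has one or three elements, so it suffices to count pairs of distinct points in a common
fibre; the ratio of the two points parametrises these pairs by the `t ≠ 0` with `t ^ 3 ≠ 1`.
-/

section SemilinearFixedPoints

theorem semilinear_iterate_smul {R M : Type*} [Semiring R] [AddCommMonoid M] [Module R M]
    {σ : R →+* R} (φ : M →ₛₗ[σ] M) (j : ℕ) (c : R) (v : M) :
    φ^[j] (c • v) = (σ ^ j) c • φ^[j] v := by
  induction j with
  | zero => simp
  | succ j ih =>
    simp only [Function.iterate_succ_apply', ih, map_smulₛₗ, pow_succ', RingHom.mul_def,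
      RingHom.comp_apply]

variable {K : Type*} [Field K] {σ : K →+* K}

theorem exists_sum_mul_pow_ne_zero {a : Fin (orderOf σ) → K} (ha : a ≠ 0) :
    ∃ c : K, ∑ j, a j * (σ ^ (j : ℕ)) c ≠ 0 := by
  have distinct : Function.Injective
      fun j : Fin (orderOf σ) ↦ ((σ ^ (j : ℕ) : K →+* K) : K →* K) := fun i j hij ↦
    Fin.ext <| pow_injOn_Iio_orderOf i.isLt j.isLt <| RingHom.ext fun c ↦ DFunLike.congr_fun hij c
  have independent := (linearIndependent_monoidHom K K).comp _ distinct
  by_contra! h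
  exact ha <| funext <| Fintype.linearIndependent_iff.mp independent a <|
    funext fun c ↦ by simpa using h c

/- Hilbert 90 averaging: the sum of the `φ ^ j (c • v)` over a full period of `σ` is fixed by `φ`,
and Dedekind's independence of the powers of `σ` provides a `c` for which it does not vanish. -/
theorem exists_ne_zero_fixed_of_iterate_orderOf_fixed {V : Type*} [AddCommGroup V] [Module K V]
    (hσ : IsOfFinOrder σ) (φ : V →ₛₗ[σ] V) {v : V} (hv : v ≠ 0) (hfix : φ^[orderOf σ] v = v) :
    ∃ u, u ≠ 0 ∧ φ u = u := by
  obtain ⟨f, hf⟩ := Module.Projective.exists_dual_ne_zero K hv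
  have coeff_ne_zero : (fun j : Fin (orderOf σ) ↦ f (φ^[j] v)) ≠ 0 := fun h ↦
    hf <| congrFun h ⟨0, hσ.orderOf_pos⟩
  obtain ⟨c, hc⟩ := exists_sum_mul_pow_ne_zero coeff_ne_zero
  refine ⟨∑ j ∈ Finset.range (orderOf σ), φ^[j] (c • v), fun h ↦ hc ?_, ?_⟩
  · rw [Fin.sum_univ_eq_sum_range (fun j ↦ f (φ^[j] v) * (σ ^ j) c), ← map_zero f, ← h, map_sum]
    exact Finset.sum_congr rfl fun j _ ↦ by
      rw [semilinear_iterate_smul, map_smul, smul_eq_mul, mul_comm]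
  · have closed : φ^[orderOf σ] (c • v) = c • v := by
      rw [semilinear_iterate_smul, pow_orderOf_eq_one, hfix, RingHom.one_def, RingHom.id_apply]
    have shift := (Finset.sum_range_succ' (fun j ↦ φ^[j] (c • v)) (orderOf σ)).symm.trans
      (Finset.sum_range_succ _ _)
    rw [closed] at shift
    simpa only [map_sum, ← Function.iterate_succ_apply' φ] using add_right_cancel shift

end SemilinearFixedPoints

section TwistedPow

variable {n R : Type*} [Fintype n] [CommRing R] (σ : R →+* R) (A : Matrix n n R)

/-- The `σ`-semilinear endomorphism `v ↦ A σ(v)` of `n → R`, where `σ` acts entrywise; the twisted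
analogue of `Matrix.mulVecLin`. -/
def twistedMulVec : (n → R) →ₛₗ[σ] (n → R) where
  toFun v := A.mulVec (σ ∘ v)
  map_add' v w := by rw [← Matrix.mulVec_add]; congr 1; ext; simp
  map_smul' c v := by rw [← Matrix.mulVec_smul]; congr 1; ext; simp

theorem twistedMulVec_apply (v : n → R) : twistedMulVec σ A v = A.mulVec (σ ∘ v) := rfl

variable [DecidableEq n]

/-- The `σ`-twisted power (or norm) `A σ(A) σ²(A) ⋯ σᵏ⁻¹(A)` of a square matrix `A`, with `σ` acting
entrywise. It is the matrix of the `k`-th iterate of `twistedMulVec σ A`. -/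
def twistedPow : ℕ → Matrix n n R
  | 0 => 1
  | k + 1 => twistedPow k * A.map (σ ^ k)

theorem twistedPow_succ (k : ℕ) : twistedPow σ A (k + 1) = twistedPow σ A k * A.map (σ ^ k) := rfl

theorem twistedPow_succ' (k : ℕ) :
    twistedPow σ A (k + 1) = A * (twistedPow σ A k).map σ := by
  induction k with
  | zero => ext; simp [twistedPow]
  | succ k ih =>
    have map_map : (A.map (σ ^ k)).map σ = A.map (σ ^ (k + 1)) := by
      rw [Matrix.map_map, pow_succ']
      rfl
    rw [twistedPow_succ, ih, mul_assoc, ← map_map, ← Matrix.map_mul, ← twistedPow_succ, ih]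

theorem twistedMulVec_iterate (k : ℕ) (v : n → R) :
    (twistedMulVec σ A)^[k] v = (twistedPow σ A k).mulVec (⇑(σ ^ k) ∘ v) := by
  induction k with
  | zero => simp [twistedPow]
  | succ k ih =>
    rw [Function.iterate_succ_apply', ih, twistedMulVec_apply, twistedPow_succ',
      ← Matrix.mulVec_mulVec]
    congr 1
    ext i
    simp [RingHom.map_mulVec, pow_succ', Function.comp_def]

variable {σ A}

theorem isUnit_twistedPow (hA : IsUnit A) (k : ℕ) : IsUnit (twistedPow σ A k) := by
  induction k with
  | zero => exact isUnit_one
  | succ k ih => exact ih.mul (hA.map (σ ^ k).mapMatrix)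

theorem map_twistedPow_of_pow_eq_one (hA : IsUnit A) {k : ℕ} (hk : σ ^ k = 1) :
    (twistedPow σ A k).map σ = A⁻¹ * twistedPow σ A k * A := by
  have intertwine : A * (twistedPow σ A k).map σ = twistedPow σ A k * A := by
    rw [← twistedPow_succ', twistedPow_succ, hk]
    rfl
  rw [mul_assoc, ← intertwine,
    Matrix.nonsing_inv_mul_cancel_left _ _ ((Matrix.isUnit_iff_isUnit_det A).mp hA)]

theorem map_trace_twistedPow (hA : IsUnit A) {k : ℕ} (hk : σ ^ k = 1) :
    σ (twistedPow σ A k).trace = (twistedPow σ A k).trace := by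
  rw [AddMonoidHom.map_trace, map_twistedPow_of_pow_eq_one hA hk, Matrix.trace_conj' hA]

theorem map_det_twistedPow (hA : IsUnit A) {k : ℕ} (hk : σ ^ k = 1) :
    σ (twistedPow σ A k).det = (twistedPow σ A k).det := by
  rw [RingHom.map_det, RingHom.mapMatrix_apply, map_twistedPow_of_pow_eq_one hA hk,
    Matrix.det_conj' hA]

theorem det_twistedPow_orderOf_sub_one_eq_zero_iff {K : Type*} [Field K] {σ : K →+* K}
    (hσ : IsOfFinOrder σ) (A : Matrix n n K) :
    (twistedPow σ A (orderOf σ) - 1).det = 0 ↔ ∃ v, v ≠ 0 ∧ twistedMulVec σ A v = v := by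
  have iterate_fixed (v : n → K) : (twistedPow σ A (orderOf σ) - 1).mulVec v = 0 ↔
      (twistedMulVec σ A)^[orderOf σ] v = v := by
    rw [twistedMulVec_iterate, pow_orderOf_eq_one, Matrix.sub_mulVec, Matrix.one_mulVec,
      sub_eq_zero]
    rfl
  simp only [← Matrix.exists_mulVec_eq_zero_iff, iterate_fixed]
  constructor
  · rintro ⟨v, hv, hfix⟩
    exact exists_ne_zero_fixed_of_iterate_orderOf_fixed hσ _ hv hfix
  · rintro ⟨v, hv, hfix⟩
    exact ⟨v, hv, Function.iterate_fixed hfix _⟩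

end TwistedPow

theorem orderOf_frobenius {K : Type*} [Field K] {p m : ℕ} [Fact p.Prime] [CharP K p]
    (hK : Nat.card K = p ^ m) : orderOf (frobenius K p) = m := by
  have : Finite K := Nat.finite_of_card_ne_zero <| hK ▸ pow_ne_zero m (NeZero.ne p)
  let : Algebra (ZMod p) K := ZMod.algebra K p
  have finrank : Module.finrank (ZMod p) K = m := by
    apply Nat.pow_right_injective (Fact.out : p.Prime).two_le
    simpa [hK] using (Module.natCard_eq_pow_finrank (K := ZMod p) (V := K)).symm
  rw [← finrank, ← FiniteField.orderOf_frobeniusAlgHom, orderOf_eq_orderOf_iff]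
  intro k
  simp [DFunLike.ext_iff, FiniteField.coe_frobeniusAlgHom, ← iterate_frobenius]

section FibTransfer

/-- The transfer matrix of the words in `0`, `1` without two consecutive ones: rows and columns are
indexed by two successive letters, and a step to the letter `1` has weight `β`. -/
def fibTransfer {R : Type*} [Zero R] [One R] (β : R) : Matrix (Fin 2) (Fin 2) R :=
  !![1, β; 1, 0]

theorem isUnit_fibTransfer {R : Type*} [CommRing R] {β : R} (hβ : IsUnit β) :
    IsUnit (fibTransfer β) := by
  rw [Matrix.isUnit_iff_isUnit_det, fibTransfer, Matrix.det_fin_two_of]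
  simpa using hβ

variable {K : Type*} [Field K] [CharP K 2]

theorem exists_twistedMulVec_fibTransfer_fixed_iff {β : K} (hβ : β ≠ 0) :
    (∃ v, v ≠ 0 ∧ twistedMulVec (frobenius K 2) (fibTransfer β) v = v) ↔
      ∃ w, w ^ 3 + w ^ 2 = β := by
  have fixed_iff (x y : K) : twistedMulVec (frobenius K 2) (fibTransfer β) ![x, y] = ![x, y] ↔
      x ^ 2 + β * y ^ 2 = x ∧ x ^ 2 = y := by
    simp [twistedMulVec_apply, fibTransfer, frobenius_def, Matrix.mulVec_eq_sum, funext_iff,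
      mul_comm]
  have two : (2 : K) = 0 := CharTwo.two_eq_zero
  constructor
  · rintro ⟨v, hv, hfix⟩
    obtain ⟨x, y, rfl⟩ : ∃ x y, v = ![x, y] := ⟨v 0, v 1, by ext i; fin_cases i <;> rfl⟩
    obtain ⟨hx, rfl⟩ := (fixed_iff x y).mp hfix
    have hx0 : x ≠ 0 := by
      rintro rfl
      simp at hv
    refine ⟨x⁻¹, ?_⟩
    have : x * (x + 1 + β * x ^ 3) = 0 := by linear_combination hx + x * two
    have := (mul_eq_zero.mp this).resolve_left hx0
    field_simp
    linear_combination this - β * x ^ 3 * two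
  · rintro ⟨w, rfl⟩
    have hw : w ≠ 0 := by
      rintro rfl
      simp at hβ
    refine ⟨![w⁻¹, (w⁻¹) ^ 2], by simpa using hw, (fixed_iff _ _).mpr ⟨?_, rfl⟩⟩
    field_simp
    linear_combination two

theorem eq_zero_or_one_of_frobenius_fixed {R : Type*} [CommRing R] [IsDomain R] [CharP R 2] {x : R}
    (hx : frobenius R 2 x = x) : x = 0 ∨ x = 1 := by
  rw [frobenius_def, sq] at hx
  exact (IsIdempotentElem.iff_eq_zero_or_one).mp hx

theorem trace_twistedPow_fibTransfer_eq_one_iff {m : ℕ} (hK : Nat.card K = 2 ^ m) {β : K}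
    (hβ : β ≠ 0) :
    (twistedPow (frobenius K 2) (fibTransfer β) m).trace = 1 ↔ ¬∃ w, w ^ 3 + w ^ 2 = β := by
  have order : orderOf (frobenius K 2) = m := orderOf_frobenius hK
  have pow_m : frobenius K 2 ^ m = 1 := order ▸ pow_orderOf_eq_one _
  have hσ : IsOfFinOrder (frobenius K 2) := orderOf_pos_iff.mp <| order ▸ Nat.pos_of_ne_zero (by
    rintro rfl
    have : Finite K := Nat.finite_of_card_ne_zero (by simp [hK])
    exact Finite.one_lt_card.ne' hK)
  have hA := isUnit_fibTransfer hβ.isUnit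
  have two : (2 : K) = 0 := CharTwo.two_eq_zero
  set P := twistedPow (frobenius K 2) (fibTransfer β) m
  have trace_P : P.trace = 0 ∨ P.trace = 1 :=
    eq_zero_or_one_of_frobenius_fixed (map_trace_twistedPow hA pow_m)
  have det_P : P.det = 1 :=
    (eq_zero_or_one_of_frobenius_fixed (map_det_twistedPow hA pow_m)).resolve_left
      ((Matrix.isUnit_iff_isUnit_det P).mp (isUnit_twistedPow hA m)).ne_zero
  have charpoly_at_one : (P - 1).det = P.trace := by
    simp only [Matrix.det_fin_two, Matrix.trace_fin_two, Matrix.sub_apply, Matrix.one_apply_eq,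
      Matrix.one_apply_ne zero_ne_one, Matrix.one_apply_ne one_ne_zero] at det_P ⊢
    linear_combination det_P + (1 - P 0 0 - P 1 1) * two
  rw [← exists_twistedMulVec_fibTransfer_fixed_iff hβ,
    ← det_twistedPow_orderOf_sub_one_eq_zero_iff hσ, order, charpoly_at_one]
  rcases trace_P with h | h <;> simp [h]

end FibTransfer

section FibWords

theorem mem_fibSet_s17 {m k : ℕ} :
    k ∈ fibSet m ↔ k < 2 ^ m ∧ ∀ j, ¬(k.testBit j ∧ k.testBit (j + 1)) := by
  simp [fibSet]

/-- The numbers encoding the words of `n + 1` bits, least significant first, without two consecutive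
ones, whose first bit is `a` and whose last bit is `b`. The bit `a` is a boundary condition for the
`n`-bit number `k / 2` made of the remaining bits of `k`, and keeps `b` meaningful for `n = 0`. -/
noncomputable def fibWordSet (n : ℕ) (a b : Bool) : Finset ℕ :=
  {k ∈ fibSet (n + 1) | k.testBit 0 = a ∧ k.testBit n = b}

theorem mem_fibWordSet {n k : ℕ} {a b : Bool} :
    k ∈ fibWordSet n a b ↔ k ∈ fibSet (n + 1) ∧ k.testBit 0 = a ∧ k.testBit n = b := by
  simp [fibWordSet]

theorem fibWordSet_zero_self (a : Bool) : fibWordSet 0 a a = {a.toNat} := by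
  ext k
  simp only [mem_fibWordSet, mem_fibSet_s17, Finset.mem_singleton]
  constructor
  · rintro ⟨⟨hk, -⟩, ha, -⟩
    interval_cases k <;> simp_all
  · rintro rfl
    cases a <;> simp [Nat.testBit_succ]

theorem fibWordSet_zero_of_ne {a b : Bool} (h : a ≠ b) : fibWordSet 0 a b = ∅ :=
  Finset.filter_eq_empty_iff.mpr fun _ _ ⟨ha, hb⟩ ↦ h (ha.symm.trans hb)

theorem disjoint_fibWordSet {n : ℕ} {a b c d : Bool} (h : a ≠ c ∨ b ≠ d) :
    Disjoint (fibWordSet n a b) (fibWordSet n c d) :=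
  Finset.disjoint_filter.mpr fun _ _ hab hcd ↦
    h.elim (· (hab.1.symm.trans hcd.1)) (· (hab.2.symm.trans hcd.2))

theorem mem_fibSet_succ_and_testBit_false {n k : ℕ} :
    k ∈ fibSet (n + 1) ∧ k.testBit n = false ↔ k ∈ fibSet n := by
  simp only [mem_fibSet_s17]
  constructor
  · rintro ⟨⟨hk, nonadj⟩, hn⟩
    refine ⟨Nat.lt_pow_two_of_testBit k fun j hj ↦ ?_, nonadj⟩
    obtain rfl | hj := hj.eq_or_lt
    · exact hn
    · exact Nat.testBit_lt_two_pow (hk.trans_le (Nat.pow_le_pow_right two_pos hj))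
  · rintro ⟨hk, nonadj⟩
    exact ⟨⟨hk.trans (Nat.pow_lt_pow_succ one_lt_two), nonadj⟩, Nat.testBit_lt_two_pow hk⟩

theorem fibWordSet_succ_false (n : ℕ) (a : Bool) :
    fibWordSet (n + 1) a false = fibWordSet n a false ∪ fibWordSet n a true := by
  ext k
  rw [Finset.mem_union, mem_fibWordSet, mem_fibWordSet, mem_fibWordSet, and_left_comm,
    mem_fibSet_succ_and_testBit_false]
  cases k.testBit n <;> simp [and_comm]

theorem two_pow_add_mem_fibSet {n k : ℕ} (hk : k < 2 ^ (n + 1)) :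
    2 ^ (n + 1) + k ∈ fibSet (n + 2) ↔ k ∈ fibSet (n + 1) ∧ k.testBit n = false := by
  have top : (2 ^ (n + 1) + k).testBit (n + 1) = true := by
    rw [Nat.testBit_two_pow_add_eq, Nat.testBit_lt_two_pow hk, Bool.not_false]
  have low {j : ℕ} (hj : j < n + 1) : (2 ^ (n + 1) + k).testBit j = k.testBit j :=
    Nat.testBit_two_pow_add_gt hj k
  have lt : 2 ^ (n + 1) + k < 2 ^ (n + 2) := by rw [pow_succ 2 (n + 1)]; omega
  simp only [mem_fibSet_s17, lt, hk, true_and]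
  constructor
  · intro nonadj
    have hn : k.testBit n = false := by
      have := nonadj n
      simpa [top, low n.lt_succ_self] using this
    refine ⟨fun j ↦ ?_, hn⟩
    obtain hj | hj := lt_or_ge j n
    · rw [← low (by omega), ← low (by omega)]
      exact nonadj j
    · have := hk.trans_le (Nat.pow_le_pow_right two_pos (Nat.succ_le_succ hj))
      simp [Nat.testBit_lt_two_pow this]
  · rintro ⟨nonadj, hn⟩ j
    obtain hj | rfl | hj := lt_trichotomy j n
    · rw [low (by omega), low (by omega)]
      exact nonadj j
    · simp [low j.lt_succ_self, hn]
    · have := lt.trans_le (Nat.pow_le_pow_right two_pos (Nat.succ_le_succ hj))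
      simp [Nat.testBit_lt_two_pow this]

theorem fibWordSet_succ_true (n : ℕ) (a : Bool) :
    fibWordSet (n + 1) a true = (fibWordSet n a false).map (addLeftEmbedding (2 ^ (n + 1))) := by
  ext k
  simp only [mem_fibWordSet, Finset.mem_map, addLeftEmbedding_apply]
  constructor
  · rintro ⟨hk, ha, hn⟩
    obtain ⟨l, rfl⟩ := Nat.exists_eq_add_of_le (Nat.ge_two_pow_of_testBit hn)
    have hl : l < 2 ^ (n + 1) := by
      have := (mem_fibSet_s17.mp hk).1
      rw [pow_succ 2 (n + 1)] at this
      omega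
    obtain ⟨hl, hln⟩ := (two_pow_add_mem_fibSet hl).mp hk
    exact ⟨l, ⟨hl, by rwa [Nat.testBit_two_pow_add_gt n.succ_pos] at ha, hln⟩, rfl⟩
  · rintro ⟨l, ⟨hl, ha, hn⟩, rfl⟩
    have hlt := (mem_fibSet_s17.mp hl).1
    exact ⟨(two_pow_add_mem_fibSet hlt).mpr ⟨hl, hn⟩,
      by rwa [Nat.testBit_two_pow_add_gt n.succ_pos],
      by rw [Nat.testBit_two_pow_add_eq, Nat.testBit_lt_two_pow hlt, Bool.not_false]⟩

theorem sum_fibWordSet_succ_false {M : Type*} [AddCommMonoid M] (n : ℕ) (a : Bool) (f : ℕ → M) :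
    ∑ k ∈ fibWordSet (n + 1) a false, f k =
      ∑ k ∈ fibWordSet n a false, f k + ∑ k ∈ fibWordSet n a true, f k := by
  rw [fibWordSet_succ_false, Finset.sum_union (disjoint_fibWordSet (.inr Bool.false_ne_true))]

theorem sum_fibWordSet_succ_true {R : Type*} [Semiring R] (β : R) (n : ℕ) (a : Bool) :
    ∑ k ∈ fibWordSet (n + 1) a true, β ^ (k / 2) =
      (∑ k ∈ fibWordSet n a false, β ^ (k / 2)) * β ^ 2 ^ n := by
  rw [fibWordSet_succ_true, Finset.sum_map, Finset.sum_mul]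
  refine Finset.sum_congr rfl fun k _ ↦ ?_
  rw [addLeftEmbedding_apply, pow_succ', Nat.mul_add_div two_pos, add_comm, pow_add]

theorem twistedPow_fibTransfer {R : Type*} [CommRing R] [CharP R 2] (β : R) (n : ℕ) :
    twistedPow (frobenius R 2) (fibTransfer β) n =
      !![∑ k ∈ fibWordSet n false false, β ^ (k / 2), ∑ k ∈ fibWordSet n false true, β ^ (k / 2);
        ∑ k ∈ fibWordSet n true false, β ^ (k / 2), ∑ k ∈ fibWordSet n true true, β ^ (k / 2)] := by
  induction n with
  | zero =>
    simp [twistedPow, fibWordSet_zero_self, fibWordSet_zero_of_ne, Matrix.one_fin_two]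
  | succ n ih =>
    have map_transfer : (fibTransfer β).map (frobenius R 2 ^ n) = !![1, β ^ 2 ^ n; 1, 0] := by
      ext i j
      fin_cases i <;> fin_cases j <;> simp [fibTransfer, ← iterate_frobenius]
    rw [twistedPow_succ, ih, map_transfer, Matrix.mul_fin_two]
    simp only [mul_one, mul_zero, add_zero, sum_fibWordSet_succ_false, sum_fibWordSet_succ_true]

theorem mem_insert_zero_fibCycSet {n i : ℕ} :
    i ∈ insert 0 (fibCycSet (n + 1)) ↔
      i < 2 ^ (n + 1) ∧ ∀ j < n + 1, ¬(i.testBit j ∧ i.testBit ((j + 1) % (n + 1))) := by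
  have : 2 ≤ 2 ^ (n + 1) := Nat.le_self_pow n.succ_ne_zero 2
  simp only [fibCycSet, Finset.mem_insert, Finset.mem_filter, Finset.mem_Icc]
  constructor
  · rintro (rfl | ⟨hi, nonadj⟩)
    · simp
    · exact ⟨by omega, nonadj⟩
  · rintro ⟨hi, nonadj⟩
    have not_all_ones : i ≠ 2 ^ (n + 1) - 1 := by
      rintro rfl
      refine nonadj 0 n.succ_pos ?_
      simp [Nat.testBit_two_pow_sub_one, Nat.mod_lt _ n.succ_pos]
    exact or_iff_not_imp_left.mpr fun _ ↦ ⟨by omega, nonadj⟩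

theorem bit_testBit_mem_fibSet_iff {n i : ℕ} :
    Nat.bit (i.testBit n) i ∈ fibSet (n + 2) ↔ i ∈ insert 0 (fibCycSet (n + 1)) := by
  rw [mem_insert_zero_fibCycSet, mem_fibSet_s17, Nat.bit_lt_two_pow_succ_iff, Nat.forall_lt_succ_right]
  refine and_congr_right fun hi ↦ ?_
  have wrap : (n + 1) % (n + 1) = 0 := Nat.mod_self _
  have interior : (∀ j, ¬(i.testBit j ∧ i.testBit (j + 1))) ↔
      ∀ j < n, ¬(i.testBit j ∧ i.testBit ((j + 1) % (n + 1))) := by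
    refine ⟨fun h j hj ↦ ?_, fun h j ↦ ?_⟩
    · rw [Nat.mod_eq_of_lt (Nat.succ_lt_succ hj)]
      exact h j
    · obtain hj | hj := lt_or_ge j n
      · simpa only [Nat.mod_eq_of_lt (Nat.succ_lt_succ hj)] using h j hj
      · have := hi.trans_le (Nat.pow_le_pow_right two_pos (Nat.succ_le_succ hj))
        simp [Nat.testBit_lt_two_pow this]
  rw [← interior, wrap, ← Nat.and_forall_add_one, and_comm]
  simp only [Nat.testBit_bit_zero, Nat.testBit_bit_succ]

theorem sum_fibWordSet_self_div_two {M : Type*} [AddCommMonoid M] (n : ℕ) (f : ℕ → M) :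
    ∑ k ∈ fibWordSet (n + 1) false false, f (k / 2) +
      ∑ k ∈ fibWordSet (n + 1) true true, f (k / 2) = f 0 + ∑ i ∈ fibCycSet (n + 1), f i := by
  have zero_notMem : 0 ∉ fibCycSet (n + 1) := by simp [fibCycSet]
  have mem_union {k : ℕ} : k ∈ fibWordSet (n + 1) false false ∪ fibWordSet (n + 1) true true ↔
      k ∈ fibSet (n + 2) ∧ k.testBit 0 = k.testBit (n + 1) := by
    rw [Finset.mem_union, mem_fibWordSet, mem_fibWordSet]
    cases k.testBit 0 <;> cases k.testBit (n + 1) <;> simp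
  have bit_div_two {k : ℕ} (hk : k.testBit 0 = k.testBit (n + 1)) :
      Nat.bit ((k / 2).testBit n) (k / 2) = k := by
    rw [Nat.testBit_div_two, ← hk, ← Nat.shiftRight_one, Nat.bit_testBit_zero_shiftRight_one]
  rw [← Finset.sum_union (disjoint_fibWordSet (.inl Bool.false_ne_true)),
    ← Finset.sum_insert zero_notMem]
  refine Finset.sum_nbij' (· / 2) (fun i ↦ Nat.bit (i.testBit n) i) ?_ ?_ ?_ ?_ fun _ _ ↦ rfl
  · intro k hk
    obtain ⟨hk, ends⟩ := mem_union.mp hk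
    rwa [← bit_testBit_mem_fibSet_iff, bit_div_two ends]
  · intro i hi
    exact mem_union.mpr ⟨bit_testBit_mem_fibSet_iff.mpr hi,
      by rw [Nat.testBit_bit_zero, Nat.testBit_bit_succ]⟩
  · exact fun k hk ↦ bit_div_two (mem_union.mp hk).2
  · exact fun i _ ↦ Nat.bit_div_two _ i

theorem trace_twistedPow_fibTransfer {R : Type*} [CommRing R] [Algebra (ZMod 2) R] [CharP R 2]
    (β : R) (n : ℕ) :
    (twistedPow (frobenius R 2) (fibTransfer β) (n + 1)).trace =
      1 + aeval β (fibCycPoly (n + 1)) := by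
  rw [twistedPow_fibTransfer, Matrix.trace_fin_two_of, sum_fibWordSet_self_div_two n (β ^ ·),
    fibCycPoly, map_sum, pow_zero]
  simp only [map_pow, aeval_X]

end FibWords

section CubicFibers

theorem card_ne_zero_cube_ne_one (K : Type*) [Field K] [Finite K] :
    Nat.card {t : K // t ≠ 0 ∧ t ^ 3 ≠ 1} + Nat.gcd (Nat.card K - 1) 3 = Nat.card K - 1 := by
  classical
  have cube_roots : Nat.card {u : Kˣ // u ^ 3 = 1} = Nat.gcd (Nat.card K - 1) 3 := by
    rw [← Nat.card_units, ← IsCyclic.card_powMonoidHom_ker (G := Kˣ) 3]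
    rfl
  have others : {t : K // t ≠ 0 ∧ t ^ 3 ≠ 1} ≃ {u : Kˣ // ¬u ^ 3 = 1} :=
    (Equiv.subtypeSubtypeEquivSubtypeInter (· ≠ 0) (· ^ 3 ≠ (1 : K))).symm.trans <|
      (unitsEquivNeZero.subtypeEquiv fun u ↦ by
        simp [← Units.val_pow_eq_pow_val]).symm
  rw [Nat.card_congr others, ← cube_roots, ← Nat.card_units, add_comm, ← Nat.card_sum,
    Nat.card_congr (Equiv.sumCompl _)]

section Domain

variable {R : Type*} [CommRing R] [IsDomain R] [CharP R 2]

theorem cube_add_sq_ne_zero_iff {u : R} : u ^ 3 + u ^ 2 ≠ 0 ↔ u ≠ 0 ∧ u ≠ 1 := by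
  rw [show u ^ 3 + u ^ 2 = u ^ 2 * (u + 1) by ring, mul_ne_zero_iff, pow_ne_zero_iff two_ne_zero,
    Ne, Ne, CharTwo.add_eq_zero]

/- The roots of `X ^ 3 + X ^ 2 + γ` sum to `1`, so two of them determine the third. -/
theorem cube_add_sq_eq_iff_of_ne {u v : R} (huv : u ≠ v) (w : R)
    (h : u ^ 3 + u ^ 2 = v ^ 3 + v ^ 2) :
    w ^ 3 + w ^ 2 = u ^ 3 + u ^ 2 ↔ w = u ∨ w = v ∨ w = 1 + u + v := by
  have two : (2 : R) = 0 := CharTwo.two_eq_zero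
  have sym : u ^ 2 + u * v + v ^ 2 + u + v = 0 := by
    refine (mul_eq_zero.mp ?_).resolve_left (sub_ne_zero.mpr huv)
    linear_combination h
  have factor : w ^ 3 + w ^ 2 - (u ^ 3 + u ^ 2) = (w - u) * ((w - v) * (w - (1 + u + v))) := by
    linear_combination (w + u) * sym + (w ^ 2 * (1 + u + v) - w * u * v
      - (w + u) * (u ^ 2 + u * v + v ^ 2 + u + v) + u ^ 2 * v + u * v ^ 2 + u * v) * two
  rw [← sub_eq_zero, factor]
  simp only [mul_eq_zero, sub_eq_zero]

theorem cube_add_sq_eq_mul_iff {u t : R} (hu : u ≠ 0) :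
    u ^ 3 + u ^ 2 = (t * u) ^ 3 + (t * u) ^ 2 ↔ u * (t ^ 3 + 1) = t ^ 2 + 1 := by
  have factor : u ^ 3 + u ^ 2 + ((t * u) ^ 3 + (t * u) ^ 2) =
    u ^ 2 * (u * (t ^ 3 + 1) + (t ^ 2 + 1)) := by ring
  rw [← CharTwo.add_eq_zero, factor, mul_eq_zero_iff_left (pow_ne_zero 2 hu), CharTwo.add_eq_zero]

end Domain

variable {K : Type*} [Field K] [CharP K 2]

theorem ratio_of_cube_add_sq_eq {u v : K} (hu : u ≠ 0) (huv : u ≠ v)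
    (h : u ^ 3 + u ^ 2 = v ^ 3 + v ^ 2) :
    (v / u) ^ 3 ≠ 1 ∧ ((v / u) ^ 2 + 1) / ((v / u) ^ 3 + 1) = u := by
  obtain ⟨t, rfl⟩ : ∃ t, v = t * u := ⟨v / u, (div_mul_cancel₀ v hu).symm⟩
  rw [cube_add_sq_eq_mul_iff hu] at h
  rw [mul_div_cancel_right₀ t hu]
  have cube_ne : t ^ 3 ≠ 1 := by
    intro ht
    rw [ht, CharTwo.add_self_eq_zero, mul_zero, eq_comm, CharTwo.add_eq_zero] at h
    exact huv (by linear_combination u * t * h - u * ht)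
  exact ⟨cube_ne, (eq_div_of_mul_eq (CharTwo.add_eq_zero.not.mpr cube_ne) h).symm⟩

theorem cube_add_sq_eq_of_ratio {t : K} (ht₀ : t ≠ 0) (ht : t ^ 3 ≠ 1) {u : K}
    (hu : u = (t ^ 2 + 1) / (t ^ 3 + 1)) :
    u ^ 3 + u ^ 2 ≠ 0 ∧ u ≠ t * u ∧ u ^ 3 + u ^ 2 = (t * u) ^ 3 + (t * u) ^ 2 := by
  have cube_add_one : t ^ 3 + 1 ≠ 0 := CharTwo.add_eq_zero.not.mpr ht
  have ne_one : t ≠ 1 := fun h ↦ ht (by rw [h, one_pow])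
  rw [eq_div_iff cube_add_one] at hu
  have u_ne_zero : u ≠ 0 := by
    rintro rfl
    rw [zero_mul, eq_comm, ← one_pow 2, ← CharTwo.add_sq] at hu
    exact ne_one (CharTwo.add_eq_zero.mp (pow_eq_zero_iff two_ne_zero |>.mp hu))
  have u_ne_one : u ≠ 1 := by
    rintro rfl
    refine ne_one (mul_left_cancel₀ (pow_ne_zero 2 ht₀) ?_)
    linear_combination hu
  exact ⟨cube_add_sq_ne_zero_iff.mpr ⟨u_ne_zero, u_ne_one⟩,
    fun h ↦ ne_one (mul_right_cancel₀ u_ne_zero (h.symm.trans (one_mul u).symm)),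
    (cube_add_sq_eq_mul_iff u_ne_zero).mpr hu⟩

/-- The fibre of `u ↦ u ^ 3 + u ^ 2` over `γ`. -/
def cubicFiber {R : Type*} [Semiring R] [Fintype R] [DecidableEq R] (γ : R) : Finset R :=
  {u | u ^ 3 + u ^ 2 = γ}

theorem mem_cubicFiber {R : Type*} [Semiring R] [Fintype R] [DecidableEq R] {u γ : R} :
    u ∈ cubicFiber γ ↔ u ^ 3 + u ^ 2 = γ := by
  simp [cubicFiber]

section Fintype

variable [Fintype K] [DecidableEq K]

theorem card_cubicFiber {γ : K} (hγ : γ ≠ 0) (hne : (cubicFiber γ).Nonempty) :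
    (cubicFiber γ).card = 1 ∨ (cubicFiber γ).card = 3 := by
  have ne_one {u : K} (hu : u ∈ cubicFiber γ) : u ≠ 1 :=
    (cube_add_sq_ne_zero_iff.mp (mem_cubicFiber.mp hu ▸ hγ)).2
  rcases hne.exists_eq_singleton_or_nontrivial with ⟨u, hu⟩ | ⟨u, hu, v, hv, huv⟩
  · exact .inl (hu ▸ Finset.card_singleton u)
  · have hu' := mem_cubicFiber.mp hu
    have fiber_eq : cubicFiber γ = {u, v, 1 + u + v} := by
      ext w
      rw [mem_cubicFiber, ← hu',
        cube_add_sq_eq_iff_of_ne huv w (hu'.trans (mem_cubicFiber.mp hv).symm)]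
      simp only [Finset.mem_insert, Finset.mem_singleton]
    have two : (2 : K) = 0 := CharTwo.two_eq_zero
    have third_ne_u : u ≠ 1 + u + v := fun h ↦ ne_one hv (by linear_combination -h - two)
    have third_ne_v : v ≠ 1 + u + v := fun h ↦ ne_one hu (by linear_combination -h - two)
    exact .inr (fiber_eq ▸ Finset.card_eq_three.mpr ⟨u, v, _, huv, third_ne_u, third_ne_v, rfl⟩)

/- For `N = 0, 1, 3` one has `3 [N = 0] + 3 N = 3 + N (N - 1)`, so counting the empty fibres
reduces to summing `N` and `N (N - 1)` over all fibres. -/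
theorem three_mul_ite_add_three_mul_card_cubicFiber {γ : K} (hγ : γ ≠ 0) :
    3 * (if cubicFiber γ = ∅ then 1 else 0) + 3 * (cubicFiber γ).card =
      3 + (cubicFiber γ).offDiag.card := by
  rw [Finset.offDiag_card]
  split_ifs with h
  · simp [h]
  · rcases card_cubicFiber hγ (Finset.nonempty_iff_ne_empty.mpr h) with h | h <;> simp [h]

theorem sum_card_cubicFiber :
    ∑ γ ∈ Finset.univ.erase (0 : K), (cubicFiber γ).card = Fintype.card K - 2 := by
  calc ∑ γ ∈ Finset.univ.erase (0 : K), (cubicFiber γ).card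
      = ({0, 1}ᶜ : Finset K).card := by
        rw [Finset.card_eq_sum_card_fiberwise (f := fun u ↦ u ^ 3 + u ^ 2)
          (t := Finset.univ.erase 0)]
        · refine Finset.sum_congr rfl fun γ hγ ↦ congrArg _ ?_
          ext u
          simp only [mem_cubicFiber, Finset.mem_filter, Finset.mem_compl, Finset.mem_insert,
            Finset.mem_singleton, not_or, ← cube_add_sq_ne_zero_iff]
          exact ⟨fun h ↦ ⟨h ▸ Finset.ne_of_mem_erase hγ, h⟩, And.right⟩
        · intro u hu
          simpa [cube_add_sq_ne_zero_iff, and_comm] using hu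
    _ = Fintype.card K - 2 := by rw [Finset.card_compl, Finset.card_pair zero_ne_one]

theorem sum_card_offDiag_cubicFiber :
    ∑ γ ∈ Finset.univ.erase (0 : K), (cubicFiber γ).offDiag.card =
      Nat.card {t : K // t ≠ 0 ∧ t ^ 3 ≠ 1} := by
  rw [Nat.card_eq_fintype_card, Fintype.card_subtype, ← Finset.card_sigma, eq_comm]
  let u (t : K) := (t ^ 2 + 1) / (t ^ 3 + 1)
  refine Finset.card_bij'
    (fun t _ ↦ ⟨u t ^ 3 + u t ^ 2, u t, t * u t⟩) (fun p _ ↦ p.2.2 / p.2.1) ?_ ?_ ?_ ?_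
  · intro t ht
    obtain ⟨ht₀, ht⟩ := (Finset.mem_filter.mp ht).2
    obtain ⟨ne_zero, ne, h⟩ := cube_add_sq_eq_of_ratio ht₀ ht rfl
    simpa [mem_cubicFiber] using ⟨ne_zero, h.symm, ne⟩
  · rintro ⟨γ, v, w⟩ h
    simp only [Finset.mem_sigma, Finset.mem_erase, Finset.mem_offDiag, mem_cubicFiber] at h
    obtain ⟨⟨hγ, -⟩, rfl, hw, hne⟩ := h
    have hv := (cube_add_sq_ne_zero_iff.mp hγ).1
    have hw0 := (cube_add_sq_ne_zero_iff.mp (hw ▸ hγ)).1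
    simpa using! ⟨⟨hw0, hv⟩, (ratio_of_cube_add_sq_eq hv hne hw.symm).1⟩
  · intro t ht
    obtain ⟨ht₀, ht⟩ := (Finset.mem_filter.mp ht).2
    have hu := (cube_add_sq_ne_zero_iff.mp (cube_add_sq_eq_of_ratio ht₀ ht rfl).1).1
    exact mul_div_cancel_right₀ t hu
  · rintro ⟨γ, v, w⟩ h
    simp only [Finset.mem_sigma, Finset.mem_erase, Finset.mem_offDiag, mem_cubicFiber] at h
    obtain ⟨⟨hγ, -⟩, rfl, hw, hne⟩ := h
    have hv := (cube_add_sq_ne_zero_iff.mp hγ).1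
    have hu : u (w / v) = v := (ratio_of_cube_add_sq_eq hv hne hw.symm).2
    simp [hu, div_mul_cancel₀ w hv]

end Fintype

theorem three_mul_card_not_cube_add_sq [Finite K] :
    3 * Nat.card {γ : K // γ ≠ 0 ∧ ¬∃ u, u ^ 3 + u ^ 2 = γ} + Nat.gcd (Nat.card K - 1) 3 =
      Nat.card K + 2 := by
  classical
  have : Fintype K := Fintype.ofFinite K
  have card_missed : Nat.card {γ : K // γ ≠ 0 ∧ ¬∃ u, u ^ 3 + u ^ 2 = γ} =
      ∑ γ ∈ Finset.univ.erase (0 : K), if cubicFiber γ = ∅ then 1 else 0 := by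
    rw [Nat.card_eq_fintype_card, Fintype.card_subtype, Finset.sum_boole, Nat.cast_id]
    congr 1
    ext γ
    simp [Finset.eq_empty_iff_forall_notMem, mem_cubicFiber]
  have sum_fibers := Finset.sum_congr rfl fun γ (hγ : γ ∈ Finset.univ.erase (0 : K)) ↦
    three_mul_ite_add_three_mul_card_cubicFiber (Finset.ne_of_mem_erase hγ)
  rw [Finset.sum_add_distrib, Finset.sum_add_distrib, ← Finset.mul_sum, ← Finset.mul_sum,
    ← card_missed, sum_card_cubicFiber, sum_card_offDiag_cubicFiber, Finset.sum_const,
    Finset.card_erase_of_mem (Finset.mem_univ 0), Finset.card_univ, smul_eq_mul,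
    ← Nat.card_eq_fintype_card] at sum_fibers
  have cubes := card_ne_zero_cube_ne_one K
  have : 1 < Nat.card K := Finite.one_lt_card
  omega

end CubicFibers

theorem gcd_two_pow_sub_one_three (m : ℕ) :
    Nat.gcd (2 ^ m - 1) 3 = if Even m then 3 else 1 := by
  rw [show 3 = 2 ^ 2 - 1 from rfl, Nat.pow_sub_one_gcd_pow_sub_one]
  split_ifs with h
  · rw [Nat.gcd_eq_right h.two_dvd]
  · rw [Nat.Coprime.gcd_eq_one (Nat.coprime_two_right.mpr (Nat.not_even_iff_odd.mp h))]
    rfl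

theorem card_roots_fibCycPoly_general {K : Type*} [Field K] [Algebra (ZMod 2) K] (m : ℕ)
    (hK : Nat.card K = 2 ^ m) :
    (Odd m → Nat.card {β : K // β ≠ 0 ∧ Polynomial.aeval β (fibCycPoly m) = 0} =
        (2 ^ m + 1) / 3) ∧
    (Even m → Nat.card {β : K // β ≠ 0 ∧ Polynomial.aeval β (fibCycPoly m) = 0} =
        (2 ^ m - 1) / 3) := by
  have : CharP K 2 := charP_of_injective_algebraMap (algebraMap (ZMod 2) K).injective 2
  have : Finite K := Nat.finite_of_card_ne_zero (hK ▸ pow_ne_zero m two_ne_zero)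
  obtain ⟨n, rfl⟩ : ∃ n, m = n + 1 := Nat.exists_eq_succ_of_ne_zero <| by
    rintro rfl
    exact Finite.one_lt_card.ne' hK
  have root_iff (β : K) : β ≠ 0 ∧ aeval β (fibCycPoly (n + 1)) = 0 ↔
      β ≠ 0 ∧ ¬∃ w, w ^ 3 + w ^ 2 = β := by
    refine and_congr_right fun hβ ↦ ?_
    rw [← trace_twistedPow_fibTransfer_eq_one_iff hK hβ, trace_twistedPow_fibTransfer, add_eq_left]
  have count := three_mul_card_not_cube_add_sq (K := K)
  rw [hK, gcd_two_pow_sub_one_three, ← Nat.card_congr (Equiv.subtypeEquivRight root_iff)] at count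
  refine ⟨fun odd ↦ ?_, fun even ↦ ?_⟩
  · rw [if_neg (Nat.not_even_iff_odd.mpr odd)] at count
    omega
  · rw [if_pos even] at count
    omega

theorem card_roots_fibCycPoly (m : ℕ) (hm : 4 ≤ m) :
    (Odd m → Nat.card {β : GaloisField 2 m // β ≠ 0 ∧ Polynomial.aeval β (fibCycPoly m) = 0} =
        (2 ^ m + 1) / 3) ∧
    (Even m → Nat.card {β : GaloisField 2 m // β ≠ 0 ∧ Polynomial.aeval β (fibCycPoly m) = 0} =
        (2 ^ m - 1) / 3) :=
  card_roots_fibCycPoly_general m (GaloisField.card 2 m (by omega))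
end
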